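/- Let d ≥ 2 and let F⁺_r = { diag(e^{r_1 t}, …, e^{r_d t}, e^{-t}) : t > 0 } ⊂ SL_{d+1}(ℝ) for a weight r ∈ R_d, and for x ∈ ℝ^d let u_x be the unipotent matrix with identity d×d block, last column (x, 1)ᵀ. Then x ∈ Bad(r) if and only if the orbit F⁺_r u_x SL_{d+1}(ℤ) is bounded in SL_{d+1}(ℝ)/SL_{d+1}(ℤ). -/

import Mathlib

/-- Topology on the special linear group, induced from the space of matrices. -/
noncomputable instance SLtop (m : ℕ) : TopologicalSpace (Matrix.SpecialLinearGroup (Fin m) ℝ) :=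
  inferInstanceAs (TopologicalSpace {A : Matrix (Fin m) (Fin m) ℝ // A.det = 1})

open Matrix MeasureTheory

lemma L1 {n : ℕ} (A : Matrix (Fin n) (Fin n) ℝ) (hA : A.det = 1) (τ : Fin n → ℝ)
    (hτ : ∀ i, 0 < τ i) (hp : 1 < ∏ i, τ i) :
    ∃ v : Fin n → ℤ, v ≠ 0 ∧ ∀ i, |(A *ᵥ (fun j => (v j : ℝ))) i| ≤ τ i := by
  classical
  set s : Set (Fin n → ℝ) := (Matrix.toLin' A) ⁻¹' (Set.Icc (fun i => - τ i) τ) with hs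
  have hdet : LinearMap.det (Matrix.toLin' A) = 1 := by rw [LinearMap.det_toLin', hA]
  have hvol : volume s = ENNReal.ofReal (∏ i, (2 * τ i)) := by
    rw [hs, Measure.addHaar_preimage_linearMap _ (by rw [hdet]; norm_num), hdet, Real.volume_Icc_pi,
      ENNReal.ofReal_prod_of_nonneg (fun i _ => by have := hτ i; positivity)]
    simp [two_mul]
  have hc : Countable (Submodule.span ℤ (Set.range (Pi.basisFun ℝ (Fin n)))).toAddSubgroup :=
    inferInstanceAs (Countable (Submodule.span ℤ (Set.range (Pi.basisFun ℝ (Fin n)))))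
  have hF := ZSpan.isAddFundamentalDomain (Pi.basisFun ℝ (Fin n)) volume
  have key : ∃ x ≠ 0, ((x : (Submodule.span ℤ (Set.range (Pi.basisFun ℝ (Fin n)))).toAddSubgroup) :
      Fin n → ℝ) ∈ s := by
    refine exists_ne_zero_mem_lattice_of_measure_mul_two_pow_lt_measure
      (s := s) (L := (Submodule.span ℤ (Set.range (Pi.basisFun ℝ (Fin n)))).toAddSubgroup) hF ?_ ?_ ?_
    · intro x hx
      simp only [hs, Set.mem_preimage, map_neg] at hx ⊢
      exact ⟨fun i => neg_le_neg (hx.2 i), fun i => by have := hx.1 i; simp at this ⊢; linarith⟩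
    · exact (convex_Icc _ _).linear_preimage _
    · rw [hvol, ZSpan.volume_fundamentalDomain]
      have : (Matrix.of (Pi.basisFun ℝ (Fin n))) = 1 := by
        ext i j; simp [Matrix.one_apply, Pi.single_apply, eq_comm]
      rw [this, Finset.prod_mul_distrib]
      simp
      have h2 : (2:ENNReal)^n = ENNReal.ofReal (2^n) := by
        rw [ENNReal.ofReal_pow (by norm_num)]; simp
      rw [h2, ← ENNReal.ofReal_mul (by positivity)]
      apply (ENNReal.ofReal_lt_ofReal_iff (by nlinarith [pow_pos (two_pos : (0:ℝ) < 2) n])).2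
      nlinarith [pow_pos (two_pos : (0:ℝ) < 2) n]
  obtain ⟨⟨y, hy⟩, hy0, hys⟩ := key
  have hy' := hy
  rw [Submodule.mem_toAddSubgroup, Module.Basis.mem_span_iff_repr_mem] at hy'
  choose v hv using hy'
  have hyv : (fun j => (v j : ℝ)) = y := by
    funext j
    simpa using hv j
  refine ⟨v, ?_, ?_⟩
  · rintro rfl
    apply hy0
    apply Subtype.ext
    show y = 0
    rw [← hyv]; ext j; simp
  · intro i
    rw [hyv, abs_le]
    simp only [hs, Set.mem_preimage, Matrix.toLin'_apply] at hys
    exact ⟨hys.1 i, hys.2 i⟩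

lemma L2 {n : ℕ} (δ : ℝ) (hδ : 0 < δ) : ∃ R : ℝ, 0 < R ∧ ∀ A : Matrix (Fin n) (Fin n) ℝ, A.det = 1 →
    (∀ v : Fin n → ℤ, v ≠ 0 → ∃ i, δ ≤ |(A *ᵥ (fun j => (v j : ℝ))) i|) →
    ∃ W : Matrix (Fin n) (Fin n) ℤ, W.det ≠ 0 ∧
      ∀ i j, |(A * W.map (Int.cast : ℤ → ℝ)) i j| ≤ R := by
  classical
  set η : ℝ := δ / (2 * (n + 1)) with hη
  have hη0 : 0 < η := by positivity
  set T : ℝ := 2 / η ^ (n - 1) with hT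
  have hT0 : 0 < T := by positivity
  refine ⟨max η T, lt_max_of_lt_left hη0, fun A hA hv => ?_⟩
  set R := max η T
  let S : Set (Fin n → ℝ) := {y | ∃ v : Fin n → ℤ, y = A *ᵥ (fun j => (v j : ℝ)) ∧ ∀ i, |y i| ≤ R}
  have hspan : Submodule.span ℝ S = ⊤ := by
    by_contra hne
    obtain ⟨f, hf0, hf⟩ := Submodule.exists_le_ker_of_lt_top _ (lt_top_iff_ne_top.2 hne)
    let c : Fin n → ℝ := fun i => f (Pi.single i 1)
    have hfc : ∀ y, f y = ∑ i, c i * y i := by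
      intro y
      rw [LinearMap.pi_apply_eq_sum_univ f y]
      refine Finset.sum_congr rfl fun i _ => ?_
      simp only [c, smul_eq_mul]
      rw [mul_comm]; congr 2; ext j; simp [Pi.single_apply, eq_comm]
    have hn : Nonempty (Fin n) := by
      by_contra h
      rw [not_nonempty_iff] at h
      exact hf0 (by ext y; exact h.elim y)
    obtain ⟨k, hk⟩ := Finite.exists_max (fun i => |c i|)
    have hck : 0 < |c k| := by
      by_contra h
      apply hf0
      have : ∀ i, c i = 0 := fun i => by
        have := (hk i).trans (not_lt.1 h)
        simpa using this
      apply LinearMap.ext; intro y; rw [hfc]; simp [this]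
    obtain ⟨v, hv0, hvb⟩ := L1 A hA (fun i => if i = k then T else η)
      (fun i => by split_ifs <;> assumption) (by
        rw [Finset.prod_ite]
        simp only [Finset.prod_const, Finset.filter_eq', Finset.mem_univ, if_true,
          Finset.card_singleton, pow_one, Finset.filter_ne', Finset.card_erase_of_mem, Finset.card_univ,
          Fintype.card_fin, hT]
        rw [div_mul_cancel₀ _ (by positivity)]; norm_num)
    set y := A *ᵥ (fun j => (v j : ℝ)) with hy
    have hyS : y ∈ S := ⟨v, rfl, fun i => by
      refine (hvb i).trans ?_
      split_ifs
      · exact le_max_right _ _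
      · exact le_max_left _ _⟩
    have hfy : f y = 0 := hf (Submodule.subset_span hyS)
    have hyne : ∀ i, i ≠ k → |y i| ≤ η := fun i hi => by simpa [hi] using hvb i
    have hyk : |y k| ≤ n * η := by
      rw [hfc, ← Finset.add_sum_erase _ _ (Finset.mem_univ k)] at hfy
      have h1 : |c k| * |y k| ≤ ∑ i ∈ Finset.univ.erase k, |c i * y i| := by
        rw [← abs_mul, eq_neg_of_add_eq_zero_left hfy, abs_neg]
        exact Finset.abs_sum_le_sum_abs _ _
      have h2 : ∑ i ∈ Finset.univ.erase k, |c i * y i| ≤ ∑ i ∈ Finset.univ.erase k, |c k| * η := by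
        refine Finset.sum_le_sum fun i hi => ?_
        rw [abs_mul]
        exact mul_le_mul (hk i) (hyne i (Finset.ne_of_mem_erase hi)) (abs_nonneg _) hck.le
      have h3 : ∑ i ∈ Finset.univ.erase k, |c k| * η ≤ ∑ i : Fin n, |c k| * η :=
        Finset.sum_le_sum_of_subset_of_nonneg (Finset.erase_subset _ _)
          (fun _ _ _ => by positivity)
      simp at h3
      have : |c k| * |y k| ≤ |c k| * (n * η) := by
        refine (h1.trans h2).trans ?_
        simp
        linarith
      exact le_of_mul_le_mul_left this hck
    obtain ⟨i, hi⟩ := hv v hv0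
    have hn1 : (1:ℝ) ≤ n := by exact_mod_cast Fin.pos_iff_nonempty.2 hn
    have h4 : |y i| ≤ n * η := by
      by_cases h : i = k
      · rw [h]; exact hyk
      · exact (hyne i h).trans (by nlinarith)
    have h5 : n * η < δ := by
      rw [hη, ← mul_div_assoc, div_lt_iff₀ (by positivity)]
      nlinarith
    linarith
  obtain ⟨f, hfS, hfspan, hfli⟩ := Submodule.exists_fun_fin_finrank_span_eq ℝ S
  have hfr : Module.finrank ℝ (Submodule.span ℝ S) = n := by
    rw [hspan]; simp
  let e : Fin n → Fin n → ℝ := f ∘ Fin.cast hfr.symm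
  have heli : LinearIndependent ℝ e := hfli.comp _ (Fin.cast_injective _)
  have heS : ∀ i, e i ∈ S := fun i => hfS _
  choose v hv1 hv2 using heS
  let W : Matrix (Fin n) (Fin n) ℤ := Matrix.of fun i j => v j i
  have hAW : A * W.map (Int.cast : ℤ → ℝ) = (Matrix.of e)ᵀ := by
    ext i j
    simp [Matrix.mul_apply, hv1, W, Matrix.mulVec, dotProduct]
  refine ⟨W, ?_, ?_⟩
  · intro h0
    have h1 : (A * W.map (Int.cast : ℤ → ℝ)).det = 0 := by
      rw [Matrix.det_mul]
      have : (W.map (Int.cast : ℤ → ℝ)).det = ((W.det : ℤ) : ℝ) := (Int.cast_det W).symm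
      rw [this, h0]; simp
    rw [hAW, Matrix.det_transpose] at h1
    have h2 : IsUnit (Matrix.of e) := Matrix.linearIndependent_rows_iff_isUnit.1 heli
    rw [Matrix.isUnit_iff_isUnit_det, h1] at h2
    simp at h2
  · intro i j
    rw [hAW]
    exact hv2 j i

lemma L3 {n : ℕ} (D : ℤ) (hD : D ≠ 0) : ∃ S : Set (Matrix (Fin n) (Fin n) ℤ), S.Finite ∧
    (∀ H ∈ S, H.det = D) ∧
    ∀ W : Matrix (Fin n) (Fin n) ℤ, W.det = D →
      ∃ γ : SpecialLinearGroup (Fin n) ℤ, ∃ H ∈ S, W = (γ : Matrix (Fin n) (Fin n) ℤ) * H := by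
  classical
  have : NeZero D.natAbs := ⟨by simpa using hD⟩
  let X := {W : Matrix (Fin n) (Fin n) ℤ // W.det = D}
  let φ : X → Matrix (Fin n) (Fin n) (ZMod D.natAbs) := fun W => W.1.map (Int.cast)
  let ψ : Set.range φ → X := fun c => c.2.choose
  have hψ : ∀ c, φ (ψ c) = c := fun c => c.2.choose_spec
  have hfin : Finite (Matrix (Fin n) (Fin n) (ZMod D.natAbs)) := by
    unfold Matrix; infer_instance
  refine ⟨Set.range fun c => (ψ c).1, Set.finite_range _, ?_, ?_⟩
  · rintro _ ⟨c, rfl⟩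
    exact (ψ c).2
  · intro W hW
    set H := ψ ⟨φ ⟨W, hW⟩, ⟨_, rfl⟩⟩ with hH
    have h1 : φ H = φ ⟨W, hW⟩ := hψ _
    have h2 : ∀ i j, ∃ k, W i j - H.1 i j = D * k := by
      intro i j
      have := congrFun (congrFun h1 i) j
      simp only [φ, Matrix.map_apply] at this
      rw [ZMod.intCast_eq_intCast_iff_dvd_sub] at this
      exact Int.natAbs_dvd.1 this
    choose N hN using h2
    have hWH : W = H.1 + D • (Matrix.of N) := by
      ext i j
      simp [← hN]
    let G : Matrix (Fin n) (Fin n) ℤ := 1 + Matrix.of N * H.1.adjugate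
    have hG : W = G * H.1 := by
      simp only [G]
      rw [add_mul, one_mul, Matrix.mul_assoc, Matrix.adjugate_mul, H.2, hWH]
      rw [Matrix.mul_smul, Matrix.mul_one]
    have hGd : G.det = 1 := by
      have := congrArg Matrix.det hG
      rw [Matrix.det_mul, hW, H.2] at this
      have h : G.det * D = 1 * D := by rw [one_mul]; exact this.symm
      exact mul_right_cancel₀ hD h
    exact ⟨⟨G, hGd⟩, H.1, ⟨_, rfl⟩, hG⟩

lemma L4 {n : ℕ} (δ : ℝ) (hδ : 0 < δ) : ∃ C : ℝ, ∀ A : Matrix (Fin n) (Fin n) ℝ, A.det = 1 →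
    (∀ v : Fin n → ℤ, v ≠ 0 → ∃ i, δ ≤ |(A *ᵥ (fun j => (v j : ℝ))) i|) →
    ∃ γ : SpecialLinearGroup (Fin n) ℤ,
      ∀ i j, |(A * (γ : Matrix (Fin n) (Fin n) ℤ).map (Int.cast : ℤ → ℝ)) i j| ≤ C := by
  classical
  obtain ⟨R, hR, hRA⟩ := L2 (n := n) δ hδ
  choose S hS1 hS2 hS3 using L3 (n := n)
  let M : ℤ := ⌈(Nat.factorial n : ℝ) * R ^ n⌉
  let U : Set (Matrix (Fin n) (Fin n) ℤ) := ⋃ D ∈ Set.Icc (-M) M, ⋃ (h : D ≠ 0), S D h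
  have hU : U.Finite := by
    refine Set.Finite.biUnion (Set.finite_Icc _ _) fun D _ => ?_
    exact Set.finite_iUnion fun h => hS1 D h
  let F : Matrix (Fin n) (Fin n) ℤ → ℝ := fun H => ∑ i, ∑ j, |((H.map (Int.cast : ℤ → ℝ))⁻¹) i j|
  obtain ⟨B, hB⟩ := (hU.image F).bddAbove
  refine ⟨R * B, fun A hA hv => ?_⟩
  obtain ⟨W, hW0, hW⟩ := hRA A hA hv
  have hdW : ((W.map (Int.cast : ℤ → ℝ)).det) = ((W.det : ℤ) : ℝ) := (Int.cast_det W).symm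
  have hWd : |(W.det : ℝ)| ≤ (Nat.factorial n : ℝ) * R ^ n := by
    have := Matrix.det_le (abv := AbsoluteValue.abs) (A := A * W.map (Int.cast : ℤ → ℝ)) (x := R)
      (fun i j => hW i j)
    rw [Matrix.det_mul, hA, one_mul, hdW] at this
    simpa using this
  have hM : W.det ∈ Set.Icc (-M) M := by
    have h1 := abs_le.1 (hWd.trans (Int.le_ceil _))
    constructor
    · exact_mod_cast h1.1
    · exact_mod_cast h1.2
  obtain ⟨γ, H, hH, hγ⟩ := hS3 W.det hW0 W rfl
  have hHU : H ∈ U := by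
    simp only [U, Set.mem_iUnion]
    exact ⟨_, hM, hW0, hH⟩
  have hHB : F H ≤ B := hB ⟨H, hHU, rfl⟩
  refine ⟨γ, fun i j => ?_⟩
  have hHdet : IsUnit (H.map (Int.cast : ℤ → ℝ)).det := by
    have : ((H.map (Int.cast : ℤ → ℝ)).det) = ((H.det : ℤ) : ℝ) := (Int.cast_det H).symm
    rw [this, hS2 _ hW0 H hH]
    simpa using hW0
  have hWm : W.map (Int.cast : ℤ → ℝ) =
      (γ : Matrix (Fin n) (Fin n) ℤ).map (Int.cast : ℤ → ℝ) * H.map (Int.cast : ℤ → ℝ) := by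
    rw [hγ]; ext i j; simp [Matrix.mul_apply]
  have key : A * (γ : Matrix (Fin n) (Fin n) ℤ).map (Int.cast : ℤ → ℝ) =
      (A * W.map (Int.cast : ℤ → ℝ)) * (H.map (Int.cast : ℤ → ℝ))⁻¹ := by
    rw [hWm, ← Matrix.mul_assoc, Matrix.mul_nonsing_inv_cancel_right _ _ hHdet]
  rw [key, Matrix.mul_apply]
  calc _ ≤ ∑ k, |(A * W.map (Int.cast : ℤ → ℝ)) i k * (H.map (Int.cast : ℤ → ℝ))⁻¹ k j| :=
        Finset.abs_sum_le_sum_abs _ _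
    _ ≤ ∑ k, R * ∑ l, |(H.map (Int.cast : ℤ → ℝ))⁻¹ k l| := by
        refine Finset.sum_le_sum fun k _ => ?_
        rw [abs_mul]
        refine mul_le_mul (hW i k) ?_ (abs_nonneg _) hR.le
        exact Finset.single_le_sum (f := fun l => |(H.map (Int.cast : ℤ → ℝ))⁻¹ k l|)
          (fun _ _ => abs_nonneg _) (Finset.mem_univ j)
    _ = R * F H := by rw [← Finset.mul_sum]
    _ ≤ R * B := by gcongr

instance SLgrp (m : ℕ) : IsTopologicalGroup (SpecialLinearGroup (Fin m) ℝ) where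
  continuous_mul := by
    refine Continuous.subtype_mk ?_ _
    exact (continuous_subtype_val.comp continuous_fst).mul (continuous_subtype_val.comp continuous_snd)
  continuous_inv := by
    refine Continuous.subtype_mk ?_ _
    exact continuous_subtype_val.matrix_adjugate

lemma SLcompact (m : ℕ) (C : ℝ) :
    IsCompact {A : SpecialLinearGroup (Fin m) ℝ | ∀ i j, |(A : Matrix (Fin m) (Fin m) ℝ) i j| ≤ C} := by
  have h1 : IsCompact {A : Matrix (Fin m) (Fin m) ℝ | ∀ i j, |A i j| ≤ C} := by
    have : IsCompact (Set.pi Set.univ fun _ : Fin m => Set.pi Set.univ fun _ : Fin m =>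
      Set.Icc (-C) C) := isCompact_univ_pi fun _ => isCompact_univ_pi fun _ => isCompact_Icc
    have he : {A : Matrix (Fin m) (Fin m) ℝ | ∀ i j, |A i j| ≤ C} =
        (Set.pi Set.univ fun _ : Fin m => Set.pi Set.univ fun _ : Fin m => Set.Icc (-C) C) := by
      apply Set.ext
      intro A
      constructor
      · intro h i _ j _
        exact abs_le.1 (h i j)
      · intro h i j
        exact abs_le.2 (h i trivial j trivial)
    rw [he]
    exact this
  have hcl : Topology.IsClosedEmbedding
      (Subtype.val : {A : Matrix (Fin m) (Fin m) ℝ // A.det = 1} → _) :=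
    (isClosed_singleton.preimage (continuous_id.matrix_det)).isClosedEmbedding_subtypeVal
  exact hcl.isCompact_preimage h1

lemma SLclosed (m : ℕ) : IsClosed ((Matrix.SpecialLinearGroup.map (n := Fin m)
    (Int.castRingHom ℝ)).range : Set (SpecialLinearGroup (Fin m) ℝ)) := by
  have : ((Matrix.SpecialLinearGroup.map (n := Fin m)
    (Int.castRingHom ℝ)).range : Set (SpecialLinearGroup (Fin m) ℝ)) =
    ⋂ i, ⋂ j, {A : SpecialLinearGroup (Fin m) ℝ | (A : Matrix (Fin m) (Fin m) ℝ) i j ∈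
      Set.range (Int.cast : ℤ → ℝ)} := by
    ext A
    simp only [SetLike.mem_coe, MonoidHom.mem_range, Set.mem_iInter, Set.mem_ofPred_eq]
    constructor
    · rintro ⟨γ, rfl⟩ i j
      exact ⟨(γ : Matrix _ _ ℤ) i j, rfl⟩
    · intro h
      choose N hN using h
      refine ⟨⟨Matrix.of N, ?_⟩, ?_⟩
      · have h1 : (((Matrix.of N).det : ℤ) : ℝ) = 1 := by
          rw [Int.cast_det, ← A.2]
          congr 1
          ext i j
          exact hN i j
        exact_mod_cast h1
      · ext i j
        exact hN i j
  rw [this]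
  refine isClosed_iInter fun i => isClosed_iInter fun j => ?_
  refine Int.isClosedEmbedding_coe_real.isClosed_range.preimage ?_
  exact (continuous_apply_apply i j).comp continuous_subtype_val

/-- Mahler's criterion, for subsets of the quotient. -/
lemma mahler_crit (m : ℕ) (Γ : Subgroup (Matrix.SpecialLinearGroup (Fin m) ℝ))
    (hΓ : Γ = (Matrix.SpecialLinearGroup.map (n := Fin m) (Int.castRingHom ℝ)).range)
    (T : Set (SpecialLinearGroup (Fin m) ℝ)) :
    IsCompact (closure ((QuotientGroup.mk : _ → SpecialLinearGroup (Fin m) ℝ ⧸ Γ) '' T)) ↔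
    ∃ δ : ℝ, 0 < δ ∧ ∀ A ∈ T, ∀ v : Fin m → ℤ, v ≠ 0 →
      ∃ i, δ ≤ |((A : Matrix (Fin m) (Fin m) ℝ) *ᵥ (fun j => (v j : ℝ))) i| := by
  have hcl : IsClosed (Γ : Set (SpecialLinearGroup (Fin m) ℝ)) := by
    rw [hΓ]; exact SLclosed m
  constructor
  · intro hK
    let V : ℕ → Set (SpecialLinearGroup (Fin m) ℝ) := fun k =>
      {A | ∀ i j, |((A⁻¹ : SpecialLinearGroup (Fin m) ℝ) : Matrix (Fin m) (Fin m) ℝ) i j| < k}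
    have hV : ∀ k, IsOpen (V k) := by
      intro k
      have : V k = ⋂ i, ⋂ j, {A | |((A⁻¹ : SpecialLinearGroup (Fin m) ℝ) :
          Matrix (Fin m) (Fin m) ℝ) i j| < k} := by
        ext A; simp [V]
      rw [this]
      refine isOpen_iInter_of_finite fun i => isOpen_iInter_of_finite fun j => ?_
      refine isOpen_lt (continuous_abs.comp ?_) continuous_const
      have hval : Continuous (fun A : SpecialLinearGroup (Fin m) ℝ =>
          (A : Matrix (Fin m) (Fin m) ℝ)) := continuous_subtype_val
      exact (continuous_apply_apply i j).comp (hval.comp continuous_inv)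
    have hmono : Monotone V := by
      intro k l hkl A hA i j
      exact (hA i j).trans_le (by exact_mod_cast hkl)
    obtain ⟨k, hk⟩ := hK.elim_directed_cover
      (fun k => (QuotientGroup.mk : _ → SpecialLinearGroup (Fin m) ℝ ⧸ Γ) '' V k)
      (fun k => QuotientGroup.isOpenMap_coe _ (hV k)) (by
        intro y _
        obtain ⟨A, rfl⟩ := QuotientGroup.mk_surjective y
        obtain ⟨k, hk⟩ := exists_nat_gt (∑ i, ∑ j,
          |((A⁻¹ : SpecialLinearGroup (Fin m) ℝ) : Matrix (Fin m) (Fin m) ℝ) i j|)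
        refine Set.mem_iUnion.2 ⟨k, A, fun i j => lt_of_le_of_lt ?_ hk, rfl⟩
        refine le_trans ?_ (Finset.single_le_sum (f := fun i => ∑ j,
          |((A⁻¹ : SpecialLinearGroup (Fin m) ℝ) : Matrix (Fin m) (Fin m) ℝ) i j|)
          (fun _ _ => Finset.sum_nonneg fun _ _ => abs_nonneg _) (Finset.mem_univ i))
        exact Finset.single_le_sum (f := fun j =>
          |((A⁻¹ : SpecialLinearGroup (Fin m) ℝ) : Matrix (Fin m) (Fin m) ℝ) i j|)
          (fun _ _ => abs_nonneg _) (Finset.mem_univ j))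
      (directed_of_isDirected_le fun a b hab => Set.image_mono (hmono hab))
    refine ⟨1 / ((m + 1) * (k + 1)), by positivity, fun A hA v hv => ?_⟩
    obtain ⟨B, hB, hBA⟩ := hk (subset_closure ⟨A, hA, rfl⟩)
    rw [QuotientGroup.eq, hΓ] at hBA
    obtain ⟨γ, hγ⟩ := hBA
    have hγv : (γ : Matrix (Fin m) (Fin m) ℤ) *ᵥ v ≠ 0 := by
      intro h
      apply hv
      have h2 := congrArg (fun w => (γ : Matrix (Fin m) (Fin m) ℤ).adjugate *ᵥ w) h
      simpa [Matrix.mulVec_mulVec, Matrix.adjugate_mul] using h2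
    obtain ⟨i, hi⟩ := Function.ne_iff.1 hγv
    by_contra hcon
    push Not at hcon
    have h3 : (1 : ℝ) ≤ |(((γ : Matrix (Fin m) (Fin m) ℤ) *ᵥ v) i : ℝ)| := by
      exact_mod_cast Int.one_le_abs hi
    have h4 : (((γ : Matrix (Fin m) (Fin m) ℤ) *ᵥ v) i : ℝ) =
        (((B⁻¹ : SpecialLinearGroup (Fin m) ℝ) : Matrix (Fin m) (Fin m) ℝ) *ᵥ
          ((A : Matrix (Fin m) (Fin m) ℝ) *ᵥ (fun j => (v j : ℝ)))) i := by
      rw [Matrix.mulVec_mulVec, (show (B⁻¹).1 * A.1 = ((SpecialLinearGroup.map (Int.castRingHom ℝ)) γ).1 by rw [hγ]; rfl)]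
      simp [Matrix.mulVec, dotProduct]
    rw [h4, Matrix.mulVec, dotProduct] at h3
    have h5 : (1:ℝ) ≤ ∑ j : Fin m, ((k:ℝ) * (1 / ((m + 1) * (k + 1)))) := by
      refine h3.trans ((Finset.abs_sum_le_sum_abs _ _).trans (Finset.sum_le_sum fun j _ => ?_))
      rw [abs_mul]
      exact mul_le_mul (hB i j).le (hcon j).le (abs_nonneg _) (by positivity)
    simp only [Finset.sum_const, Finset.card_univ, Fintype.card_fin, nsmul_eq_mul] at h5
    rw [← mul_assoc, mul_one_div, le_div_iff₀ (by positivity)] at h5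
    have : (0:ℝ) ≤ m := by positivity
    have : (0:ℝ) ≤ k := by positivity
    nlinarith
  · rintro ⟨δ, hδ, h⟩
    obtain ⟨C, hC⟩ := L4 (n := m) δ hδ
    have : T2Space (SpecialLinearGroup (Fin m) ℝ ⧸ Γ) := by
      infer_instance
    have hK := (SLcompact m C).image (QuotientGroup.continuous_mk (N := Γ))
    refine hK.closure_of_subset ?_
    rintro _ ⟨A, hA, rfl⟩
    obtain ⟨γ, hγ⟩ := hC A.1 A.2 (h A hA)
    refine ⟨A * Matrix.SpecialLinearGroup.map (Int.castRingHom ℝ) γ, ?_, ?_⟩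
    · intro i j
      exact hγ i j
    · rw [QuotientGroup.eq, hΓ]
      refine ⟨γ⁻¹, ?_⟩
      rw [map_inv]; group

lemma gu_comp (d : ℕ) (r : Fin d → ℝ) (x : Fin d → ℝ) 
    (g : ℝ → Matrix.SpecialLinearGroup (Fin (d + 1)) ℝ)
    (hg : ∀ t : ℝ, (g t : Matrix (Fin (d + 1)) (Fin (d + 1)) ℝ) =
      Matrix.diagonal (fun i : Fin (d + 1) => if h : (i : ℕ) < d then Real.exp (r ⟨i, h⟩ * t)
        else Real.exp (-t)))
    (u : Matrix.SpecialLinearGroup (Fin (d + 1)) ℝ)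
    (hu : ∀ i j : Fin (d + 1), (u : Matrix (Fin (d + 1)) (Fin (d + 1)) ℝ) i j =
      if h : (i : ℕ) < d ∧ (j : ℕ) = d then x ⟨i, h.1⟩ else if i = j then 1 else 0)
    (t : ℝ) (v : Fin (d + 1) → ℝ) :
    (∀ i : Fin d, (((g t * u : SpecialLinearGroup (Fin (d + 1)) ℝ) :
      Matrix (Fin (d + 1)) (Fin (d + 1)) ℝ) *ᵥ v) i.castSucc =
        Real.exp (r i * t) * (v i.castSucc + x i * v (Fin.last d))) ∧
    (((g t * u : SpecialLinearGroup (Fin (d + 1)) ℝ) :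
      Matrix (Fin (d + 1)) (Fin (d + 1)) ℝ) *ᵥ v) (Fin.last d) =
        Real.exp (-t) * v (Fin.last d) := by
  rw [show (g t * u).1 = (g t).1 * u.1 from rfl, ← Matrix.mulVec_mulVec, hg]
  constructor
  · intro i
    rw [Matrix.mulVec_diagonal]
    have : ((u : Matrix (Fin (d + 1)) (Fin (d + 1)) ℝ) *ᵥ v) i.castSucc =
        v i.castSucc + x i * v (Fin.last d) := by
      rw [Matrix.mulVec, dotProduct, Fin.sum_univ_castSucc]
      simp [hu, fun j : Fin d => j.2.ne]
    rw [this]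
    simp
  · rw [Matrix.mulVec_diagonal]
    have : ((u : Matrix (Fin (d + 1)) (Fin (d + 1)) ℝ) *ᵥ v) (Fin.last d) = v (Fin.last d) := by
      rw [Matrix.mulVec, dotProduct, Fin.sum_univ_castSucc]
      simp [hu, fun j : Fin d => (Fin.castSucc_lt_last j).ne']
    rw [this]
    simp



/-- Dani–Kleinbock correspondence: `x ∈ Bad(r)` iff the orbit `F_r⁺ u_x ℤ` is bounded
(i.e. has compact closure) in `SL_{d+1}(ℝ)/SL_{d+1}(ℤ)`. -/
theorem stmt_16 (d : ℕ) (hd : 2 ≤ d) (r : Fin d → ℝ) (hr : ∀ i, 0 ≤ r i)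
    (hsum : ∑ i, r i = 1) (x : Fin d → ℝ)
    (g : ℝ → Matrix.SpecialLinearGroup (Fin (d + 1)) ℝ)
    (hg : ∀ t : ℝ, (g t : Matrix (Fin (d + 1)) (Fin (d + 1)) ℝ) =
      Matrix.diagonal (fun i : Fin (d + 1) => if h : (i : ℕ) < d then Real.exp (r ⟨i, h⟩ * t)
        else Real.exp (-t)))
    (u : Matrix.SpecialLinearGroup (Fin (d + 1)) ℝ)
    (hu : ∀ i j : Fin (d + 1), (u : Matrix (Fin (d + 1)) (Fin (d + 1)) ℝ) i j =
      if h : (i : ℕ) < d ∧ (j : ℕ) = d then x ⟨i, h.1⟩ else if i = j then 1 else 0)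
    (Γ : Subgroup (Matrix.SpecialLinearGroup (Fin (d + 1)) ℝ))
    (hΓ : Γ = (Matrix.SpecialLinearGroup.map (n := Fin (d + 1)) (Int.castRingHom ℝ)).range) :
    (∃ ε : ℝ, 0 < ε ∧ ∀ q : ℕ, 0 < q →
        ∃ i, ε ≤ (q : ℝ) ^ (r i) * |(q : ℝ) * x i - round ((q : ℝ) * x i)|) ↔
      IsCompact (closure {y : Matrix.SpecialLinearGroup (Fin (d + 1)) ℝ ⧸ Γ |
        ∃ t : ℝ, 0 < t ∧ y = QuotientGroup.mk (g t * u)}) := by 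
  have hset : {y : Matrix.SpecialLinearGroup (Fin (d + 1)) ℝ ⧸ Γ |
        ∃ t : ℝ, 0 < t ∧ y = QuotientGroup.mk (g t * u)} =
      (QuotientGroup.mk : _ → SpecialLinearGroup (Fin (d + 1)) ℝ ⧸ Γ) ''
        {A | ∃ t : ℝ, 0 < t ∧ A = g t * u} := by
    ext y
    constructor
    · rintro ⟨t, ht, rfl⟩
      exact ⟨_, ⟨t, ht, rfl⟩, rfl⟩
    · rintro ⟨_, ⟨t, ht, rfl⟩, rfl⟩
      exact ⟨t, ht, rfl⟩
  rw [hset, mahler_crit (d + 1) Γ hΓ]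
  have hr1 : ∀ i, r i ≤ 1 := fun i => by
    rw [← hsum]
    exact Finset.single_le_sum (fun j _ => hr j) (Finset.mem_univ i)
  constructor
  · rintro ⟨ε, hε, h⟩
    refine ⟨min (1 / 2) (ε / 2), by positivity, ?_⟩
    rintro _ ⟨t, ht, rfl⟩ v hv
    set δ := min (1 / 2) (ε / 2) with hδ
    have hδ1 : δ < 1 := (min_le_left _ _).trans_lt (by norm_num)
    have hδε : δ < ε := (min_le_right _ _).trans_lt (by linarith)
    have hδ0 : 0 < δ := by positivity
    obtain ⟨h1, h2⟩ := gu_comp d r x g hg u hu t (fun j => (v j : ℝ))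
    by_contra hcon
    push Not at hcon
    have hlast := hcon (Fin.last d)
    rw [h2, abs_mul, abs_of_pos (Real.exp_pos _)] at hlast
    have hoth : ∀ i : Fin d, Real.exp (r i * t) *
        |(v i.castSucc : ℝ) + x i * (v (Fin.last d) : ℝ)| < δ := fun i => by
      have := hcon i.castSucc
      rwa [h1, abs_mul, abs_of_pos (Real.exp_pos _)] at this
    by_cases hq : v (Fin.last d) = 0
    · apply hv
      funext i
      refine Fin.lastCases hq (fun i => ?_) i
      by_contra hi
      have h3 := hoth i
      rw [hq] at h3
      have h4 : (1:ℝ) ≤ |(v i.castSucc : ℝ)| := by exact_mod_cast Int.one_le_abs hi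
      have h5 : 1 ≤ Real.exp (r i * t) := Real.one_le_exp (mul_nonneg (hr i) ht.le)
      simp only [Int.cast_zero, mul_zero, add_zero] at h3
      nlinarith
    · obtain ⟨i, hi⟩ := h (v (Fin.last d)).natAbs (Int.natAbs_pos.2 hq)
      have hqa : (((v (Fin.last d)).natAbs : ℕ) : ℝ) = |(v (Fin.last d) : ℝ)| := by
        rw [Nat.cast_natAbs, Int.cast_abs]
      rw [hqa] at hi
      set Q : ℝ := (v (Fin.last d) : ℝ) with hQ
      have hQ0 : 0 < |Q| := abs_pos.2 (by rw [hQ]; exact_mod_cast hq)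
      have hQt : |Q| ≤ Real.exp t := by
        have : |Q| < Real.exp t * δ := by
          rw [Real.exp_neg, inv_mul_lt_iff₀ (Real.exp_pos _)] at hlast
          exact hlast
        nlinarith [Real.exp_pos t]
      have hpow : |Q| ^ (r i) ≤ Real.exp (r i * t) := by
        rw [mul_comm, Real.exp_mul]
        exact Real.rpow_le_rpow hQ0.le hQt (hr i)
      have hrd : |(|Q| * x i) - round (|Q| * x i)| ≤ |(v i.castSucc : ℝ) + x i * Q| := by
        rcases abs_choice Q with hh | hh
        · rw [hh]
          refine (round_le _ (-(v i.castSucc))).trans (le_of_eq ?_)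
          push_cast
          congr 1; ring
        · rw [hh]
          refine (round_le _ ((v i.castSucc))).trans (le_of_eq ?_)
          rw [← abs_neg]
          congr 1; ring
      have := mul_le_mul hpow hrd (abs_nonneg _) (Real.exp_pos _).le
      linarith [hoth i]
  · rintro ⟨δ₀, hδ₀, h⟩
    set δ := min (1 / 2) (δ₀ / 2) with hδ
    have hδ1 : δ < 1 := (min_le_left _ _).trans_lt (by norm_num)
    have hδε : δ < δ₀ := (min_le_right _ _).trans_lt (by linarith)
    have hδ0 : 0 < δ := by positivity
    refine ⟨δ * δ, by positivity, fun q hq => ?_⟩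
    by_contra hcon
    push Not at hcon
    have hq1 : (1:ℝ) ≤ q := by exact_mod_cast hq
    have hqδ : 1 < q / δ := by rw [lt_div_iff₀ hδ0]; linarith
    have hexp : Real.exp (Real.log (q / δ)) = q / δ := Real.exp_log (by linarith)
    let v : Fin (d + 1) → ℤ := Fin.lastCases (q : ℤ) (fun i => - round ((q : ℝ) * x i))
    have hvl : v (Fin.last d) = q := by simp [v]
    have hvc : ∀ i : Fin d, v i.castSucc = - round ((q : ℝ) * x i) := fun i => by simp [v]
    obtain ⟨h1, h2⟩ := gu_comp d r x g hg u hu (Real.log (q / δ)) (fun j => (v j : ℝ))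
    obtain ⟨i, hi⟩ := h _ ⟨Real.log (q / δ), Real.log_pos hqδ, rfl⟩ v (by
      intro h0
      rw [h0] at hvl
      simp at hvl
      omega)
    revert hi
    refine Fin.lastCases ?_ (fun i => ?_) i
    · rw [h2, hvl, Real.exp_neg, hexp]
      intro hi
      have : (q / δ)⁻¹ * ((q : ℤ) : ℝ) = δ := by
        push_cast
        field_simp
      rw [this, abs_of_pos hδ0] at hi
      linarith
    · rw [h1, hvl, hvc, abs_mul, abs_of_pos (Real.exp_pos _), mul_comm (r i), Real.exp_mul, hexp,
        Real.div_rpow (by positivity) hδ0.le]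
      intro hi
      have hc := hcon i
      have h3 : δ ≤ δ ^ (r i) := by
        conv_lhs => rw [← Real.rpow_one δ]
        exact Real.rpow_le_rpow_of_exponent_ge hδ0 hδ1.le (hr1 i)
      have h4 : |((-round ((q : ℝ) * x i) : ℤ) : ℝ) + x i * ((q : ℤ) : ℝ)| =
          |(q : ℝ) * x i - round ((q : ℝ) * x i)| := by
        congr 1; push_cast; ring
      rw [h4, div_mul_eq_mul_div, le_div_iff₀ (Real.rpow_pos_of_pos hδ0 _)] at hi
      nlinarith
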